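/- arXiv:2411.16307 — 2 statements merged into one kernel-verified Lean document; each statement's English description precedes it below -/
import Mathlib

section
/- Let f1 and f2 be the symmetric functions GF(2)^3 × GF(2)^3 → GF(2)^2 defined as follows on pairs of distinct nonzero vectors P, Q: f1(P,Q) = (0,1) if {P,Q,P+Q} = {(0,1,1),(1,0,1),(1,1,0)} and (0,0) otherwise; f2(P,Q) = (0,1) if {P,Q,P+Q} = {(0,1,1),(1,0,0),(1,1,1)}, (1,0) if {P,Q,P+Q} = {(0,1,1),(1,0,1),(1,1,0)}, and (0,0) otherwise; both are (0,0) when P=Q, P=0 or Q=0. Then the Steiner triple systems S(f1) and S(f2) of order 31 are not isomorphic, and every Steiner triple system of order 31 with exactly three Veblen points is isomorphic to S(f1) or to S(f2). -/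
/-!
Adjoining an identity `e` to the points of a Steiner triple system, with `x x = e` and `x y` the
third point of the triple through `x` and `y`, gives a Steiner loop; isomorphisms of systems and
of loops correspond (`LoopRep.iso_of_hom`, `LoopRep.hom_of_iso`), and the Veblen points are the
nonidentity central elements (`LoopRep.veblen_iff`). A system of order 31 with three Veblen points
is therefore a Steiner loop of order 32 whose centre has order 4. The quotient by the centre is the
Steiner loop of order 8, which is `GF(2)^3` (`sl8`), so the loop is a central extension given by a
factor system `f` with values in `GF(2)^2` (`exists_fs`).

A scalar factor system is a function on the seven lines of the Fano plane. Modulo coboundaries it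
is determined by its syndrome, the weighted sum of the normal vectors of the lines, since the lines
span the `[7,4]` Hamming code; hence it is cohomologous to the indicator `chi w` of a line, or to
zero (`exists_chi`). The two components of `f` thus give a pair `(w, w')` of vectors of `GF(2)^3`,
on which automorphisms of `GF(2)^3` and `GF(2)^2` act. The rank of the pair is the only invariant
(`classify`): rank 0 is the elementary abelian group, in which all points are Veblen points,
rank 1 is `vf1` and rank 2 is `vf2`.

The systems of `vf1` and `vf2` are not isomorphic because the loop of `vf1` has only one
nonidentity associator while that of `vf2` has at least two (`not_iso`).
-/

universe u v

/-- `T` is the triple set of a Steiner triple system on the point set `α`: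
every member of `T` has three elements, and every pair of distinct points
lies in exactly one member of `T`. -/
def IsSTS {α : Type u} (T : Set (Finset α)) : Prop :=
  (∀ t ∈ T, t.card = 3) ∧
  ∀ a b : α, a ≠ b → ∃! t : Finset α, t ∈ T ∧ a ∈ t ∧ b ∈ t

/-- `x` is a Veblen point of the Steiner triple system with triple set `T`:
whenever `{x,a,b}`, `{x,c,d}` and `{t,a,c}` are triples, so is `{t,b,d}`. -/
def IsVeblen {α : Type u} [DecidableEq α] (T : Set (Finset α)) (x : α) : Prop :=
  ∀ a b c d t : α, ({x, a, b} : Finset α) ∈ T → ({x, c, d} : Finset α) ∈ T →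
    ({t, a, c} : Finset α) ∈ T → ({t, b, d} : Finset α) ∈ T

/-- Isomorphism of Steiner triple systems: a bijection of the point sets carrying
the triples of one system exactly onto the triples of the other. -/
def STSIso {α : Type u} {β : Type v} [DecidableEq β]
    (T₁ : Set (Finset α)) (T₂ : Set (Finset β)) : Prop :=
  ∃ e : α ≃ β, ∀ t : Finset α, t ∈ T₁ ↔ t.image (e : α → β) ∈ T₂

/-- The points of the quotient system at a point `x`: the triples through `x`. -/
abbrev QuotPts {α : Type u} (T : Set (Finset α)) (x : α) : Type u :=
  {t : Finset α // t ∈ T ∧ x ∈ t}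

/-- The triples of the quotient system at a Veblen point `x`: three distinct
triples `T1`, `T2`, `T3` through `x` form a triple iff there are `a ∈ T1 \ {x}`
and `c ∈ T2 \ {x}` such that the third point of the triple through `a` and `c`
lies in `T3`. -/
def QuotTriples {α : Type u} [DecidableEq α] (T : Set (Finset α)) (x : α) :
    Set (Finset (QuotPts T x)) :=
  {b | ∃ T1 T2 T3 : QuotPts T x, T1 ≠ T2 ∧ T1 ≠ T3 ∧ T2 ≠ T3 ∧ b = {T1, T2, T3} ∧
      ∃ a ∈ T1.1, a ≠ x ∧ ∃ c ∈ T2.1, c ≠ x ∧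
        ∃ d, ({a, c, d} : Finset α) ∈ T ∧ d ∈ T3.1}

/-- The nonzero vectors of `GF(2)^n`, i.e. the points of `PG(n-1,2)`. -/
abbrev PGPt (n : ℕ) : Type := {u : Fin n → ZMod 2 // u ≠ 0}

/-- The lines of `PG(n-1,2)`: sets `{u,v,w}` of distinct nonzero vectors of
`GF(2)^n` with `u + v + w = 0`. -/
def PGTriples (n : ℕ) : Set (Finset (PGPt n)) :=
  {t | ∃ u v w : PGPt n, u ≠ v ∧ u ≠ w ∧ v ≠ w ∧ t = {u, v, w} ∧
      u.1 + v.1 + w.1 = 0}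

/-- The system contains a Pasch configuration: six distinct points
`x, a, b, c, d, t` with `{x,a,b}`, `{x,c,d}`, `{t,a,c}`, `{t,b,d}` all triples. -/
def HasPasch {α : Type u} [DecidableEq α] (T : Set (Finset α)) : Prop :=
  ∃ x a b c d t : α, ({x, a, b, c, d, t} : Finset α).card = 6 ∧
    ({x, a, b} : Finset α) ∈ T ∧ ({x, c, d} : Finset α) ∈ T ∧
    ({t, a, c} : Finset α) ∈ T ∧ ({t, b, d} : Finset α) ∈ T

open scoped Classical

/-- `GF(2)^3`. -/
abbrev V3 : Type := Fin 3 → ZMod 2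

/-- `GF(2)^2`. -/
abbrev V2 : Type := Fin 2 → ZMod 2

/-- The point set of the extension construction for order 31:
`(GF(2)^3 × GF(2)^2) \ {(0,0)}`. -/
abbrev SPt31 : Type := {p : V3 × V2 // p ≠ 0}

/-- The triples of the incidence structure `S(f)` associated with a factor
system `f : GF(2)^3 × GF(2)^3 → GF(2)^2`: the 3-element subsets
`{(P,x),(Q,y),(R,z)}` of the point set with `P + Q + R = 0` and
`x + y + z = f P Q`. -/
def STrip31 (f : V3 → V3 → V2) : Set (Finset SPt31) :=
  {t | ∃ u w r : SPt31, u ≠ w ∧ u ≠ r ∧ w ≠ r ∧ t = {u, w, r} ∧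
      u.1.1 + w.1.1 + r.1.1 = 0 ∧ u.1.2 + w.1.2 + r.1.2 = f u.1.1 w.1.1}

/-- The factor system `f1`: `(0,1)` on pairs of distinct nonzero vectors `P`, `Q`
with `{P,Q,P+Q} = {(0,1,1),(1,0,1),(1,1,0)}`, and `(0,0)` otherwise. -/
noncomputable def vf1 : V3 → V3 → V2 := fun P Q =>
  if P ≠ Q ∧ P ≠ 0 ∧ Q ≠ 0 ∧
      ({P, Q, P + Q} : Finset V3) = ({![0,1,1], ![1,0,1], ![1,1,0]} : Finset V3)
  then ![0,1] else 0

/-- The factor system `f2`: on pairs of distinct nonzero vectors `P`, `Q` it is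
`(0,1)` if `{P,Q,P+Q} = {(0,1,1),(1,0,0),(1,1,1)}`, `(1,0)` if
`{P,Q,P+Q} = {(0,1,1),(1,0,1),(1,1,0)}`, and `(0,0)` in all other cases. -/
noncomputable def vf2 : V3 → V3 → V2 := fun P Q =>
  if P ≠ Q ∧ P ≠ 0 ∧ Q ≠ 0 ∧
      ({P, Q, P + Q} : Finset V3) = ({![0,1,1], ![1,0,0], ![1,1,1]} : Finset V3)
  then ![0,1]
  else if P ≠ Q ∧ P ≠ 0 ∧ Q ≠ 0 ∧
      ({P, Q, P + Q} : Finset V3) = ({![0,1,1], ![1,0,1], ![1,1,0]} : Finset V3)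
  then ![1,0] else 0

/-! ### Steiner loops and Steiner triple systems -/

/-- `(L, e, m)` is a Steiner loop: a commutative loop of exponent 2 with identity `e`
and the totally symmetric law `x (x y) = y`. -/
structure IsSL {L : Type*} (e : L) (m : L → L → L) : Prop where
  comm : ∀ x y, m x y = m y x
  self : ∀ x, m x x = e
  one : ∀ x, m e x = x
  cancel : ∀ x y, m x (m x y) = y

/-- `j` identifies the points of the triple system `T` with the nonidentity elements
of the Steiner loop `(L, e, m)` so that the triples are the sets `{a, b, ab}`. -/
structure LoopRep {α : Type*} {L : Type*} [DecidableEq α] (T : Set (Finset α)) (e : L)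
    (m : L → L → L) (j : α → L) : Prop where
  sl : IsSL e m
  inj : Function.Injective j
  ne : ∀ a, j a ≠ e
  surj : ∀ x, x ≠ e → ∃ a, j a = x
  form : ∀ t ∈ T, ∃ a b c, t = {a, b, c}
  tri : ∀ a b c, ({a, b, c} : Finset α) ∈ T ↔ m (j a) (j b) = j c

/-- Centrality of `x`, in the form `(xa)(xb) = ab`; by total symmetry this is equivalent
to `x (ab) = (xa) b`. -/
def Cen {L : Type*} (m : L → L → L) (x : L) : Prop :=
  ∀ a b, m (m x a) (m x b) = m a b

namespace IsSL

variable {L : Type*} {e : L} {m : L → L → L}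

theorem mul_one (h : IsSL e m) (x : L) : m x e = x := by rw [h.comm, h.one]

theorem cancel' (h : IsSL e m) (x y : L) : m (m x y) y = x := by
  rw [h.comm, h.comm x y, h.cancel]

theorem left_inj (h : IsSL e m) {x y z : L} (hh : m x y = m x z) : y = z := by
  rw [← h.cancel x y, hh, h.cancel]

theorem eq_comm' (h : IsSL e m) {x y z : L} (hh : m x y = z) : m x z = y := by
  rw [← hh, h.cancel]

theorem eq_one (h : IsSL e m) {x y : L} (hh : m x y = e) : x = y := by
  have := h.eq_comm' hh
  rw [h.mul_one] at this
  exact this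

theorem cen_one (h : IsSL e m) : Cen m e := fun a b => by rw [h.one, h.one]

theorem cen_mul (h : IsSL e m) {x y : L} (hx : Cen m x) (hy : Cen m y) : Cen m (m x y) := by
  have key : ∀ a, m (m x y) a = m x (m y a) := fun a => by
    have h2 := hx y (m y a)
    rw [h.cancel] at h2
    -- `(xy)(x(ya)) = y(ya) = a`
    exact h.eq_comm' h2
  intro a b
  rw [key, key, hx, hy]

/-- Central elements associate with everything. -/
theorem cen_assoc (h : IsSL e m) {x : L} (hx : Cen m x) (a b : L) :
    m (m x a) b = m x (m a b) := by
  have h2 := hx a (m a b)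
  rw [h.cancel] at h2
  exact h.eq_comm' h2

theorem cen_assoc' (h : IsSL e m) {x : L} (hx : Cen m x) (a b : L) :
    m a (m x b) = m x (m a b) := by
  rw [h.comm, h.cen_assoc hx, h.comm b]

end IsSL

section Translate

variable {α : Type*} {β : Type*} {L : Type*} {L' : Type*} [DecidableEq α]
  [DecidableEq β] {T : Set (Finset α)} {T' : Set (Finset β)} {e : L} {e' : L'}
  {m' : L' → L' → L'} {j' : β → L'} {m : L → L → L} {j : α → L}

/-- The Veblen points are the nonidentity central elements of the Steiner loop. -/
theorem LoopRep.veblen_iff (r : LoopRep T e m j) (x : α) : IsVeblen T x ↔ Cen m (j x) := by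
  have h := r.sl
  constructor
  · intro hv a c
    by_cases ha : a = e
    · rw [ha, h.mul_one, h.cancel, h.one]
    by_cases hc : c = e
    · rw [hc, h.mul_one, h.comm, h.cancel, h.mul_one]
    by_cases hxa : j x = a
    · rw [← hxa, h.self, h.one]
    by_cases hxc : j x = c
    · rw [← hxc, h.self, h.mul_one, h.comm]
    by_cases hac : a = c
    · rw [hac, h.self, h.self]
    obtain ⟨a, rfl⟩ := r.surj _ ha
    obtain ⟨c, rfl⟩ := r.surj _ hc
    obtain ⟨b, hb⟩ := r.surj (m (j x) (j a)) fun hh => hxa (h.eq_one hh)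
    obtain ⟨d, hd⟩ := r.surj (m (j x) (j c)) fun hh => hxc (h.eq_one hh)
    obtain ⟨t, ht⟩ := r.surj (m (j a) (j c)) fun hh => hac (h.eq_one hh)
    have h1 := hv a b c d t ((r.tri _ _ _).2 hb.symm) ((r.tri _ _ _).2 hd.symm)
      ((r.tri _ _ _).2 (by rw [ht, h.comm, h.cancel]))
    rw [r.tri] at h1
    rw [← hb, ← hd, ← ht]
    have h2 := h.eq_comm' (h.comm _ _ ▸ h1 : m (j b) (j t) = j d)
    exact h2
  · intro hx a b c d t h1 h2 h3
    rw [r.tri] at h1 h2 h3 ⊢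
    have h4 := hx (j a) (j c)
    rw [h1, h2] at h4
    have h5 : m (j a) (j c) = j t := by
      rw [h.comm] at h3
      exact h.eq_comm' h3
    rw [h5] at h4
    have h6 := h.eq_comm' h4
    rw [h.comm]
    exact h6

/-- Isomorphic Steiner loops have isomorphic triple systems. -/
theorem LoopRep.iso_of_hom (r : LoopRep T e m j) (r' : LoopRep T' e' m' j') (φ : L → L')
    (hφ : Function.Bijective φ) (hm : ∀ x y, φ (m x y) = m' (φ x) (φ y)) : STSIso T T' := by
  have he : φ e = e' := by rw [← r.sl.self e, hm, r'.sl.self]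
  have hex : ∀ a : α, ∃ b : β, j' b = φ (j a) := fun a =>
    r'.surj _ fun hh => r.ne a (hφ.1 (hh.trans he.symm))
  choose g hg using hex
  have hgb : Function.Bijective g := by
    constructor
    · intro a b hab
      apply r.inj
      apply hφ.1
      rw [← hg, ← hg, hab]
    · intro b
      obtain ⟨x, hx⟩ := hφ.2 (j' b)
      obtain ⟨a, ha⟩ := r.surj x fun hh => r'.ne b (by rw [← hx, hh, he])
      refine ⟨a, r'.inj ?_⟩
      rw [hg, ha, hx]
  have key : ∀ a b c : α, ({a, b, c} : Finset α) ∈ T ↔ ({g a, g b, g c} : Finset β) ∈ T' := by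
    intro a b c
    rw [r.tri, r'.tri, hg, hg, hg, ← hm, hφ.1.eq_iff]
  refine ⟨Equiv.ofBijective g hgb, fun t => ?_⟩
  constructor
  · intro ht
    obtain ⟨a, b, c, rfl⟩ := r.form t ht
    have := (key a b c).1 ht
    simpa [Finset.image_insert] using this
  · intro ht
    obtain ⟨a', b', c', h3⟩ := r'.form _ ht
    obtain ⟨a, rfl⟩ := hgb.2 a'
    obtain ⟨b, rfl⟩ := hgb.2 b'
    obtain ⟨c, rfl⟩ := hgb.2 c'
    have h4 : t = {a, b, c} := by
      apply Finset.image_injective hgb.1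
      simpa [Finset.image_insert] using h3
    rw [h4]
    apply (key a b c).2
    rw [← h3]
    exact ht

/-- Isomorphic triple systems have isomorphic Steiner loops. -/
theorem LoopRep.hom_of_iso (r : LoopRep T e m j) (r' : LoopRep T' e' m' j') (hi : STSIso T T') :
    ∃ φ : L → L', Function.Bijective φ ∧ ∀ x y, φ (m x y) = m' (φ x) (φ y) := by
  obtain ⟨g, hg⟩ := hi
  have key : ∀ a b c : α, m (j a) (j b) = j c ↔ m' (j' (g a)) (j' (g b)) = j' (g c) := by
    intro a b c
    rw [← r.tri, ← r'.tri, hg]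
    simp [Finset.image_insert]
  have hex : ∀ x : L, ∃ y : L', (x = e → y = e') ∧ ∀ a, j a = x → y = j' (g a) := by
    intro x
    by_cases hx : x = e
    · exact ⟨e', fun _ => rfl, fun a ha => absurd (ha.trans hx) (r.ne a)⟩
    · obtain ⟨a, rfl⟩ := r.surj x hx
      refine ⟨j' (g a), fun hh => absurd hh hx, fun b hb => ?_⟩
      rw [r.inj hb]
  choose φ h1 h2 using hex
  have he : φ e = e' := h1 e rfl
  have hj : ∀ a, φ (j a) = j' (g a) := fun a => h2 _ a rfl
  refine ⟨φ, ⟨?_, ?_⟩, ?_⟩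
  · intro x y hxy
    by_cases hx : x = e <;> by_cases hy : y = e
    · rw [hx, hy]
    · obtain ⟨b, rfl⟩ := r.surj y hy
      rw [hx, he, hj] at hxy
      exact absurd hxy.symm (r'.ne _)
    · obtain ⟨b, rfl⟩ := r.surj x hx
      rw [hy, he, hj] at hxy
      exact absurd hxy (r'.ne _)
    · obtain ⟨a, rfl⟩ := r.surj x hx
      obtain ⟨b, rfl⟩ := r.surj y hy
      rw [hj, hj] at hxy
      rw [g.injective (r'.inj hxy)]
  · intro y
    by_cases hy : y = e'
    · exact ⟨e, he.trans hy.symm⟩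
    · obtain ⟨b, rfl⟩ := r'.surj y hy
      exact ⟨j (g.symm b), by rw [hj, g.apply_symm_apply]⟩
  · intro x y
    by_cases hx : x = e
    · rw [hx, he, r.sl.one, r'.sl.one]
    by_cases hy : y = e
    · rw [hy, he, r.sl.mul_one, r'.sl.mul_one]
    by_cases hxy : x = y
    · rw [hxy, r.sl.self, r'.sl.self, he]
    obtain ⟨a, rfl⟩ := r.surj x hx
    obtain ⟨b, rfl⟩ := r.surj y hy
    obtain ⟨c, hc⟩ := r.surj (m (j a) (j b)) fun hh => hxy (r.sl.eq_one hh)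
    rw [← hc, hj, hj, hj]
    exact ((key a b c).1 hc.symm).symm

/-- Every Steiner triple system comes from a Steiner loop with one more element. -/
theorem exists_rep (hT : IsSTS T) :
    ∃ m : Option α → Option α → Option α, LoopRep T none m some := by
  obtain ⟨hc, hu⟩ := hT
  have dist : ∀ a b c : α, ({a, b, c} : Finset α) ∈ T → a ≠ b ∧ a ≠ c ∧ b ≠ c := by
    intro a b c h
    have h3 := hc _ h
    refine ⟨?_, ?_, ?_⟩
    · rintro rfl
      have := Finset.card_le_two (a := a) (b := c)
      simp_all
    · rintro rfl
      have := Finset.card_le_two (a := b) (b := a)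
      have h4 : ({a, b, a} : Finset α) = {b, a} := by ext; simp
      rw [h4] at h3
      omega
    · rintro rfl
      have := Finset.card_le_two (a := a) (b := b)
      simp_all
  have uniq : ∀ a b c d : α, ({a, b, c} : Finset α) ∈ T → ({a, b, d} : Finset α) ∈ T → c = d := by
    intro a b c d h1 h2
    obtain ⟨hab, hac, hbc⟩ := dist _ _ _ h1
    have h3 := (hu a b hab).unique ⟨h1, by simp, by simp⟩ ⟨h2, by simp, by simp⟩
    have h4 : c ∈ ({a, b, d} : Finset α) := by rw [← h3]; simp
    simp only [Finset.mem_insert, Finset.mem_singleton] at h4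
    rcases h4 with h4 | h4 | h4
    · exact absurd h4.symm hac
    · exact absurd h4.symm hbc
    · exact h4
  have hform : ∀ t ∈ T, ∃ a b c, t = {a, b, c} := by
    intro t ht
    obtain ⟨a, b, c, -, -, -, h⟩ := Finset.card_eq_three.1 (hc t ht)
    exact ⟨a, b, c, h⟩
  have ex : ∀ a b : α, ∃ c, a ≠ b → ({a, b, c} : Finset α) ∈ T := by
    intro a b
    by_cases hab : a = b
    · exact ⟨a, fun h => absurd hab h⟩
    obtain ⟨t, ⟨ht, ha, hb⟩, -⟩ := hu a b hab
    obtain ⟨c, hct, hca⟩ : ∃ c ∈ t, c ∉ ({a, b} : Finset α) := by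
      by_contra! hcon
      have h1 := Finset.card_le_card (show t ⊆ {a, b} from hcon)
      have h2 := Finset.card_le_two (a := a) (b := b)
      have := hc t ht
      omega
    simp only [Finset.mem_insert, Finset.mem_singleton, not_or] at hca
    refine ⟨c, fun _ => ?_⟩
    have hsub : ({a, b, c} : Finset α) ⊆ t := by
      intro x hx
      simp only [Finset.mem_insert, Finset.mem_singleton] at hx
      rcases hx with rfl | rfl | rfl <;> assumption
    have h3 : ({a, b, c} : Finset α).card = 3 :=
      Finset.card_eq_three.2 ⟨a, b, c, hab, Ne.symm hca.1, Ne.symm hca.2, rfl⟩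
    rw [Finset.eq_of_subset_of_card_le hsub (by rw [h3, hc t ht])]
    exact ht
  choose g hg using ex
  have rot : ∀ a b c : α, ({a, b, c} : Finset α) = {a, c, b} := fun a b c => by
    ext; simp; tauto
  have swap : ∀ a b c : α, ({a, b, c} : Finset α) = {b, a, c} := fun a b c => by
    ext; simp; tauto
  let m : Option α → Option α → Option α := fun x y =>
    match x, y with
    | none, y => y
    | some a, none => some a
    | some a, some b => if a = b then none else some (g a b)
  have mnn : ∀ y, m none y = y := fun y => rfl
  have msn : ∀ a, m (some a) none = some a := fun y => rfl
  have mss : ∀ a b, m (some a) (some b) = if a = b then none else some (g a b) :=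
    fun a b => rfl
  have hm : ∀ a b c : α, ({a, b, c} : Finset α) ∈ T ↔ m (some a) (some b) = some c := by
    intro a b c
    rw [mss]
    constructor
    · intro h
      rw [if_neg (dist _ _ _ h).1]
      exact congrArg some (uniq _ _ _ _ (hg a b (dist _ _ _ h).1) h)
    · intro h
      by_cases hab : a = b
      · simp [hab] at h
      · rw [if_neg hab, Option.some_inj] at h
        rw [← h]
        exact hg a b hab
  refine ⟨m, ⟨⟨?_, ?_, mnn, ?_⟩, Option.some_injective α, fun a => by simp, ?_, hform, hm⟩⟩
  · rintro (_ | a) (_ | b)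
    · rfl
    · rfl
    · rfl
    · by_cases hab : a = b
      · rw [hab]
      · symm
        have h1 := hg b a (Ne.symm hab)
        have h2 : m (some a) (some b) = some (g b a) := by
          rw [← hm, swap]
          exact h1
        rw [h2]
        exact (hm _ _ _).1 h1
  · rintro (_ | a)
    · rfl
    · simp [mss]
  · rintro (_ | a) (_ | b)
    · rfl
    · rfl
    · simp [msn, mss]
    · by_cases hab : a = b
      · simp [hab, msn, mss]
      · have h1 := hg a b hab
        rw [(hm _ _ _).1 h1, ← hm, rot]
        exact h1
  · rintro (_ | a) h
    · exact absurd rfl h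
    · exact ⟨a, rfl⟩

end Translate

/-! ### The Steiner loop of order 8 -/

/-- The Steiner loop of order 8 is unique: it is `GF(2)^3`. -/
theorem sl8 {Q : Type*} [Fintype Q] {e : Q} {m : Q → Q → Q} (h : IsSL e m)
    (hcard : Fintype.card Q = 8) :
    ∃ φ : V3 → Q, Function.Bijective φ ∧ ∀ x y, φ (x + y) = m (φ x) (φ y) := by
  obtain ⟨a, ha⟩ : ∃ a, a ∉ ({e} : Finset Q) := by
    by_contra! hcon
    have h1 := Finset.card_le_card (fun x _ => hcon x : (Finset.univ : Finset Q) ⊆ _)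
    rw [Finset.card_univ, hcard] at h1
    simp at h1
  obtain ⟨b, hb⟩ : ∃ b, b ∉ ({e, a} : Finset Q) := by
    by_contra! hcon
    have h1 := Finset.card_le_card (fun x _ => hcon x : (Finset.univ : Finset Q) ⊆ _)
    rw [Finset.card_univ, hcard] at h1
    have := h1.trans Finset.card_le_two
    omega
  obtain ⟨c, hc⟩ : ∃ c, c ∉ ({e, a, b, m a b} : Finset Q) := by
    by_contra! hcon
    have h1 := Finset.card_le_card (fun x _ => hcon x : (Finset.univ : Finset Q) ⊆ _)
    rw [Finset.card_univ, hcard] at h1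
    have := h1.trans Finset.card_le_four
    omega
  simp only [Finset.mem_insert, Finset.mem_singleton, not_or] at ha hb hc
  obtain ⟨hb1, hb2⟩ := hb
  obtain ⟨hc1, hc2, hc3, hc4⟩ := hc
  obtain ⟨comm, self, one, cancel⟩ := h
  have hone : ∀ x, m x e = x := fun x => by rw [comm, one]
  have hrc : ∀ x y, m (m x y) y = x := fun x y => by rw [comm, comm x y, cancel]
  have card8 : ({e, a, b, m a b, c, m a c, m b c, m (m a b) c} : Finset Q).card = 8 := by
    have n1 : m a b ≠ e := by grind
    have n2 : m a b ≠ a := by grind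
    have n3 : m a b ≠ b := by grind
    have n4 : m a c ≠ e := by grind
    have n5 : m a c ≠ a := by grind
    have n6 : m a c ≠ b := by grind
    have n7 : m a c ≠ m a b := by grind
    have n8 : m a c ≠ c := by grind
    have n9 : m b c ≠ e := by grind
    have n10 : m b c ≠ a := by grind
    have n11 : m b c ≠ b := by grind
    have n12 : m b c ≠ m a b := by grind
    have n13 : m b c ≠ c := by grind
    have n14 : m b c ≠ m a c := by grind
    have n15 : m (m a b) c ≠ e := by grind
    have n16 : m (m a b) c ≠ a := by grind
    have n17 : m (m a b) c ≠ b := by grind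
    have n18 : m (m a b) c ≠ m a b := by grind
    have n19 : m (m a b) c ≠ c := by grind
    have n20 : m (m a b) c ≠ m a c := by grind
    have n21 : m (m a b) c ≠ m b c := by grind
    simp [*, eq_comm]
    grind
  have huniv := Finset.eq_univ_of_card _ (card8.trans hcard.symm)
  have hall : ∀ x, x = e ∨ x = a ∨ x = b ∨ x = m a b ∨ x = c ∨ x = m a c ∨ x = m b c ∨
      x = m (m a b) c := by
    intro x
    have := Finset.mem_univ x
    rw [← huniv] at this
    simpa using this
  -- each product below is identified by excluding the other seven elements by cancellation
  have e1 : m a (m b c) = m (m a b) c := by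
    rcases hall (m a (m b c)) with h | h | h | h | h | h | h | h <;> grind
  have e2 : m b (m a c) = m (m a b) c := by
    rcases hall (m b (m a c)) with h | h | h | h | h | h | h | h <;> grind
  have e3 : m (m a b) (m a c) = m b c := by
    rcases hall (m (m a b) (m a c)) with h | h | h | h | h | h | h | h <;> grind
  have hz : ∀ p : ZMod 2, p = 0 ∨ p = 1 := by decide
  have h10 : (1 : ZMod 2) ≠ 0 := by decide
  have h11 : (1 : ZMod 2) + 1 = 0 := by decide
  let φ : V3 → Q := fun P =>
    m (m (if P 0 = 0 then e else a) (if P 1 = 0 then e else b)) (if P 2 = 0 then e else c)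
  have hφ : ∀ P, φ P =
    m (m (if P 0 = 0 then e else a) (if P 1 = 0 then e else b)) (if P 2 = 0 then e else c) :=
    fun P => rfl
  have hsurj : Function.Surjective φ := by
    intro x
    rcases hall x with h | h | h | h | h | h | h | h
    · exact ⟨![0, 0, 0], by simp [hφ, one, h]⟩
    · exact ⟨![1, 0, 0], by simp [hφ, hone, h]⟩
    · exact ⟨![0, 1, 0], by simp [hφ, one, hone, h]⟩
    · exact ⟨![1, 1, 0], by simp [hφ, hone, h]⟩
    · exact ⟨![0, 0, 1], by simp [hφ, one, h]⟩
    · exact ⟨![1, 0, 1], by simp [hφ, hone, h]⟩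
    · exact ⟨![0, 1, 1], by simp [hφ, one, h]⟩
    · exact ⟨![1, 1, 1], by simp [hφ, h]⟩
  refine ⟨φ, (Fintype.bijective_iff_surjective_and_card φ).2 ⟨hsurj, by
    rw [hcard]; simp [V3]⟩, ?_⟩
  intro x y
  rw [hφ, hφ, hφ]
  simp only [Pi.add_apply]
  rcases hz (x 0) with hx0 | hx0 <;> rcases hz (x 1) with hx1 | hx1 <;>
    rcases hz (x 2) with hx2 | hx2 <;> rcases hz (y 0) with hy0 | hy0 <;>
    rcases hz (y 1) with hy1 | hy1 <;> rcases hz (y 2) with hy2 | hy2 <;>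
    simp only [hx0, hx1, hx2, hy0, hy1, hy2, h10, h11, add_zero, zero_add, if_true, if_false,
      one, hone, self] <;> grind

/-! ### Central extensions of `GF(2)^3` by `GF(2)^2` -/

/-- Factor systems: `f P Q` depends only on the line `{P, Q, P + Q}` and vanishes on
degenerate pairs. -/
structure FS {A : Type*} [Zero A] (f : V3 → V3 → A) : Prop where
  comm : ∀ P Q, f P Q = f Q P
  self : ∀ P, f P P = 0
  zero : ∀ P, f 0 P = 0
  tri : ∀ P Q, f P (P + Q) = f P Q

/-- The loop operation on `GF(2)^3 × GF(2)^2` given by a factor system. -/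
def mF (f : V3 → V3 → V2) (u w : V3 × V2) : V3 × V2 :=
  (u.1 + w.1, u.2 + w.2 + f u.1 w.1)

theorem add_self_pi {n : ℕ} (x : Fin n → ZMod 2) : x + x = 0 := by
  funext i
  exact CharTwo.add_self_eq_zero (x i)

theorem add_cancel_pi {n : ℕ} (x y : Fin n → ZMod 2) : x + (x + y) = y := by
  rw [← add_assoc, add_self_pi, zero_add]

theorem eq_of_add_pi {n : ℕ} {x y : Fin n → ZMod 2} (h : x + y = 0) : x = y := by
  have := add_cancel_pi x y
  rw [h, add_zero] at this
  exact this

theorem FS.isSL {f : V3 → V3 → V2} (hf : FS f) : IsSL (0 : V3 × V2) (mF f) where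
  comm x y := by
    simp only [mF]
    rw [add_comm x.1, add_comm x.2, hf.comm]
  self x := by
    simp only [mF]
    rw [add_self_pi, add_self_pi, hf.self, add_zero]
    rfl
  one x := by
    simp [mF, hf.zero]
  cancel x y := by
    simp only [mF]
    rw [add_cancel_pi, hf.tri, ← add_assoc, add_cancel_pi, add_assoc, add_self_pi, add_zero]

/-- `S(f)` is the triple system of the Steiner loop `mF f`. -/
theorem FS.rep [DecidableEq SPt31] {f : V3 → V3 → V2} (hf : FS f) :
    LoopRep (STrip31 f) (0 : V3 × V2) (mF f) Subtype.val where
  sl := hf.isSL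
  inj := Subtype.val_injective
  ne a := a.2
  surj x hx := ⟨⟨x, hx⟩, rfl⟩
  form := by
    rintro t ⟨u, w, r, -, -, -, h, -⟩
    refine ⟨u, w, r, ?_⟩
    rw [h]
    congr!
  tri := by
    have h := hf.isSL
    have hiff : ∀ u w r : SPt31, (u.1.1 + w.1.1 + r.1.1 = 0 ∧
        u.1.2 + w.1.2 + r.1.2 = f u.1.1 w.1.1) ↔ mF f u.1 w.1 = r.1 := by
      intro u w r
      simp only [mF, Prod.ext_iff]
      constructor
      · rintro ⟨h1, h2⟩
        refine ⟨eq_of_add_pi h1, ?_⟩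
        rw [← h2, add_cancel_pi]
      · rintro ⟨h1, h2⟩
        rw [← h1, ← h2, add_self_pi, add_cancel_pi]
        exact ⟨rfl, rfl⟩
    intro a b c
    constructor
    · rintro ⟨u, w, r, huw, hur, hwr, ht, h1⟩
      rw [hiff] at h1
      have hset : ∀ x, (x = a ∨ x = b ∨ x = c) ↔ (x = u ∨ x = w ∨ x = r) := by
        intro x
        have := Finset.ext_iff.1 ht x
        simpa using this
      have h2 := h.eq_comm' h1
      have h3 := (h.comm _ _).trans h1
      have h4 := h.eq_comm' h3
      have h5 := (h.comm _ _).trans h2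
      have h6 := (h.comm _ _).trans h4
      have hu := (hset u).2 (by simp)
      have hw := (hset w).2 (by simp)
      have hr := (hset r).2 (by simp)
      rcases hu with rfl | rfl | rfl <;> rcases hw with rfl | rfl | rfl <;>
        rcases hr with rfl | rfl | rfl <;> first | assumption | exact absurd rfl ‹_›
    · intro hm
      refine ⟨a, b, c, ?_, ?_, ?_, by congr!, (hiff _ _ _).2 hm⟩
      · rintro rfl
        rw [h.self] at hm
        exact c.2 hm.symm
      · rintro rfl
        have := h.eq_comm' hm
        rw [h.self] at this
        exact b.2 this.symm
      · rintro rfl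
        have := h.eq_comm' ((h.comm _ _).trans hm)
        rw [h.self] at this
        exact a.2 this.symm

/-- A Steiner loop of order 32 whose centre is `ι (GF(2)^2)` is the extension of
`GF(2)^3` by `GF(2)^2` given by some factor system. -/
theorem exists_fs {L : Type*} [Fintype L] {e : L} {m : L → L → L} (h : IsSL e m)
    (hcard : Fintype.card L = 32) (ι : V2 → L) (ιinj : Function.Injective ι)
    (ιadd : ∀ v w, ι (v + w) = m (ι v) (ι w)) (ιcen : ∀ z, Cen m z ↔ ∃ v, ι v = z) :
    ∃ f : V3 → V3 → V2, FS f ∧ ∃ Φ : V3 × V2 → L, Function.Bijective Φ ∧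
      ∀ x y, Φ (mF f x y) = m (Φ x) (Φ y) := by
  have ι0 : ι 0 = e := by rw [← add_zero 0, ιadd, h.self]
  have cenι : ∀ v, Cen m (ι v) := fun v => (ιcen _).2 ⟨v, rfl⟩
  have rinj : ∀ {x y z : L}, m x z = m y z → x = y := fun {x y z} hh => by
    rw [← h.cancel' x z, hh, h.cancel']
  let S : Setoid L :=
    { r := fun u w => ∃ v, u = m (ι v) w
      iseqv := by
        refine ⟨fun u => ⟨0, by rw [ι0, h.one]⟩, ?_, ?_⟩
        · rintro u w ⟨v, rfl⟩
          exact ⟨v, by rw [h.cancel]⟩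
        · rintro u w t ⟨v, rfl⟩ ⟨v', rfl⟩
          exact ⟨v + v', by rw [ιadd, h.cen_assoc (cenι v)]⟩ }
  have Sr : ∀ u w : L, (⟦u⟧ : Quotient S) = ⟦w⟧ ↔ ∃ v, u = m (ι v) w := fun u w => Quotient.eq
  let mQ : Quotient S → Quotient S → Quotient S := Quotient.map₂ m (by
    rintro u u' ⟨v, rfl⟩ w w' ⟨v', rfl⟩
    exact ⟨v + v', by rw [ιadd, h.cen_assoc (cenι v), h.cen_assoc' (cenι v'),
      h.cen_assoc (cenι v)]⟩)
  have mQmk : ∀ u w : L, mQ ⟦u⟧ ⟦w⟧ = ⟦m u w⟧ := fun u w => rfl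
  have hQ : IsSL (⟦e⟧ : Quotient S) mQ := by
    refine ⟨?_, ?_, ?_, ?_⟩
    · rintro ⟨x⟩ ⟨y⟩
      exact congrArg _ (h.comm x y)
    · rintro ⟨x⟩
      exact congrArg _ (h.self x)
    · rintro ⟨x⟩
      exact congrArg _ (h.one x)
    · rintro ⟨x⟩ ⟨y⟩
      exact congrArg _ (h.cancel x y)
  have hout : ∀ q : Quotient S, (⟦q.out⟧ : Quotient S) = q := fun q => q.out_eq
  have hmul : ∀ v u, (⟦m (ι v) u⟧ : Quotient S) = ⟦u⟧ := fun v u => (Sr _ _).2 ⟨v, rfl⟩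
  have hcQ : Fintype.card (Quotient S) = 8 := by
    have hb : Function.Bijective fun p : Quotient S × V2 => m (ι p.2) p.1.out := by
      constructor
      · rintro ⟨q, v⟩ ⟨q', v'⟩ hh
        simp only at hh
        have h1 := congrArg (fun u => (⟦u⟧ : Quotient S)) hh
        simp only [hmul, hout] at h1
        subst h1
        rw [ιinj (rinj hh)]
      · intro u
        obtain ⟨v, hv⟩ := (Sr u (⟦u⟧ : Quotient S).out).1 (hout _).symm
        exact ⟨(⟦u⟧, v), hv.symm⟩
    have h1 := Fintype.card_of_bijective hb
    rw [hcard, Fintype.card_prod] at h1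
    have h2 : Fintype.card V2 = 4 := by simp [V2]
    rw [h2] at h1
    omega
  obtain ⟨φ, hφb, hφ⟩ := sl8 hQ hcQ
  have hφ0 : φ 0 = ⟦e⟧ := by rw [← add_zero 0, hφ, hQ.self]
  -- a normalised section of the projection onto the quotient
  obtain ⟨s, s0, hs⟩ : ∃ s : V3 → L, s 0 = e ∧ ∀ P, (⟦s P⟧ : Quotient S) = φ P := by
    refine ⟨fun P => if P = 0 then e else (φ P).out, if_pos rfl, fun P => ?_⟩
    by_cases hP : P = 0
    · simp only [hP, if_true, hφ0]
    · simp only [hP, if_false, hout]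
  have hf : ∀ P Q, ∃ v, m (s P) (s Q) = m (ι v) (s (P + Q)) := by
    intro P Q
    rw [← Sr, ← mQmk, hs, hs, hs, hφ]
  choose f hf using hf
  refine ⟨f, ⟨?_, ?_, ?_, ?_⟩, fun p => m (ι p.2) (s p.1), ?_, ?_⟩
  · intro P Q
    apply ιinj
    apply rinj (z := s (P + Q))
    rw [← hf, h.comm, hf, add_comm]
  · intro P
    have h1 := hf P P
    rw [add_self_pi, s0, h.self, h.mul_one, ← ι0] at h1
    exact (ιinj h1).symm
  · intro P
    have h1 := hf 0 P
    rw [zero_add, s0, ← ι0] at h1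
    exact (ιinj (rinj h1)).symm
  · intro P Q
    apply ιinj
    apply rinj (z := s Q)
    have h1 := hf P (P + Q)
    rw [add_cancel_pi] at h1
    rw [← h1]
    have h2 : s (P + Q) = m (ι (f P Q)) (m (s P) (s Q)) := by rw [hf, h.cancel]
    rw [h2, h.cen_assoc' (cenι _), h.cancel]
  · rw [Fintype.bijective_iff_injective_and_card]
    constructor
    · rintro ⟨P, v⟩ ⟨P', v'⟩ hh
      simp only at hh
      have h1 := congrArg (fun u => (⟦u⟧ : Quotient S)) hh
      simp only [hmul, hs] at h1
      have h2 := hφb.1 h1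
      subst h2
      rw [ιinj (rinj hh)]
    · rw [hcard]
      simp [V3, V2]
  · rintro ⟨P, v⟩ ⟨Q, w⟩
    simp only [mF]
    rw [h.cen_assoc (cenι v), h.cen_assoc' (cenι w), hf, ιadd (v + w),
      h.cen_assoc (cenι (v + w)), ιadd v w, h.cen_assoc (cenι v)]

/-! ### Scalar factor systems up to coboundaries -/

theorem FS.zero' {A : Type*} [Zero A] {f : V3 → V3 → A} (hf : FS f) (P : V3) : f P 0 = 0 := by
  rw [hf.comm, hf.zero]

/-- The coboundary of `s`: the change of a factor system caused by moving the section by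
`s`. In characteristic 2 no signs occur. -/
def cob {A : Type*} [Add A] (s : V3 → A) (P Q : V3) : A := s P + s Q + s (P + Q)

/-- The scalar product on `GF(2)^3`. -/
def dot (w P : V3) : ZMod 2 := w 0 * P 0 + w 1 * P 1 + w 2 * P 2

/-- The indicator of the line with normal vector `w`; for `w = 0` it is zero. -/
def chi (w P Q : V3) : ZMod 2 :=
  if w ≠ 0 ∧ P ≠ Q ∧ P ≠ 0 ∧ Q ≠ 0 ∧ dot w P = 0 ∧ dot w Q = 0 then 1 else 0

theorem dot_add (w P Q : V3) : dot w (P + Q) = dot w P + dot w Q := by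
  simp only [dot, Pi.add_apply]
  ring

theorem chi_fs (w : V3) : FS (chi w) := by
  refine ⟨?_, ?_, ?_, ?_⟩
  · intro P Q
    simp only [chi]
    congr 1
    grind
  · intro P
    simp [chi]
  · intro P
    simp [chi]
  · intro P Q
    have h1 : P = P + Q ↔ Q = 0 := by simp
    have h2 : P + Q = 0 ↔ P = Q :=
      ⟨eq_of_add_pi, fun h => by rw [h, add_self_pi]⟩
    simp only [chi, ne_eq, h1, h2, dot_add]
    congr 1
    grind

theorem cob_fs (s : V3 → ZMod 2) (h0 : s 0 = 0) : FS (cob s) := by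
  refine ⟨?_, ?_, ?_, ?_⟩
  · intro P Q
    simp only [cob]
    rw [add_comm P]
    ring
  · intro P
    rw [cob, add_self_pi, h0, add_zero, CharTwo.add_self_eq_zero]
  · intro P
    simp only [cob, h0, zero_add, CharTwo.add_self_eq_zero]
  · intro P Q
    simp only [cob, add_cancel_pi]
    ring

theorem FS.add {f g : V3 → V3 → ZMod 2} (hf : FS f) (hg : FS g) :
    FS (fun P Q => f P Q + g P Q) where
  comm P Q := by rw [hf.comm, hg.comm]
  self P := by rw [hf.self, hg.self, add_zero]
  zero P := by rw [hf.zero, hg.zero, add_zero]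
  tri P Q := by rw [hf.tri, hg.tri]

/-- Two of the points of each of the seven lines of the Fano plane. -/
def lineRep : Fin 7 → V3 × V3 :=
  ![(![1, 0, 0], ![0, 1, 0]), (![1, 0, 0], ![0, 0, 1]), (![0, 1, 0], ![0, 0, 1]),
    (![1, 1, 0], ![0, 0, 1]), (![1, 0, 1], ![0, 1, 0]), (![0, 1, 1], ![1, 0, 0]),
    (![1, 1, 0], ![1, 0, 1])]

theorem line_cover (P Q : V3) : P = 0 ∨ Q = 0 ∨ P = Q ∨ ∃ i : Fin 7,
    (P = (lineRep i).1 ∨ P = (lineRep i).2 ∨ P = (lineRep i).1 + (lineRep i).2) ∧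
    (Q = (lineRep i).1 ∨ Q = (lineRep i).2 ∨ Q = (lineRep i).1 + (lineRep i).2) := by
  revert P Q
  decide +kernel

/-- A factor system vanishing on all seven lines is zero. -/
theorem FS.eq_zero {f : V3 → V3 → ZMod 2} (hf : FS f)
    (h : ∀ i, f (lineRep i).1 (lineRep i).2 = 0) (P Q : V3) : f P Q = 0 := by
  rcases line_cover P Q with rfl | rfl | rfl | ⟨i, hP, hQ⟩
  · exact hf.zero _
  · exact hf.zero' _
  · exact hf.self _
  · have h1 := h i
    generalize (lineRep i).1 = A at *
    generalize (lineRep i).2 = B at *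
    have h2 : f B A = 0 := by rw [hf.comm, h1]
    have h3 : f A (A + B) = 0 := by rw [hf.tri, h1]
    have h4 : f B (A + B) = 0 := by rw [add_comm, hf.tri, h2]
    have h5 : f (A + B) A = 0 := by rw [hf.comm, h3]
    have h6 : f (A + B) B = 0 := by rw [hf.comm, h4]
    rcases hP with rfl | rfl | rfl <;> rcases hQ with rfl | rfl | rfl <;>
      first | assumption | exact hf.self _

/-- The syndrome of a factor system: the sum of the normal vectors of the lines,
weighted by the values of the factor system. Factor systems with syndrome zero are
coboundaries (`exists_cob_of_synd`). -/
def synd (f : V3 → V3 → ZMod 2) : V3 :=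
  ![f ![0, 1, 0] ![0, 0, 1] + f ![1, 1, 0] ![0, 0, 1] + f ![1, 0, 1] ![0, 1, 0]
      + f ![1, 1, 0] ![1, 0, 1],
    f ![1, 0, 0] ![0, 0, 1] + f ![1, 1, 0] ![0, 0, 1] + f ![0, 1, 1] ![1, 0, 0]
      + f ![1, 1, 0] ![1, 0, 1],
    f ![1, 0, 0] ![0, 1, 0] + f ![1, 0, 1] ![0, 1, 0] + f ![0, 1, 1] ![1, 0, 0]
      + f ![1, 1, 0] ![1, 0, 1]]

theorem synd_chi (w : V3) : synd (chi w) = w := by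
  revert w
  decide +kernel

theorem synd_add (f g : V3 → V3 → ZMod 2) :
    synd (fun P Q => f P Q + g P Q) = synd f + synd g := by
  funext i
  fin_cases i <;> simp [synd] <;> ring

/-- The section can be moved so that the factor system vanishes on the first four lines of
`lineRep`; the vanishing of the syndrome then forces the remaining three values to be zero. -/
theorem exists_cob_of_synd {f : V3 → V3 → ZMod 2} (hf : FS f) (h : synd f = 0) :
    ∃ s : V3 → ZMod 2, s 0 = 0 ∧ ∀ P Q, f P Q = cob s P Q := by
  let s : V3 → ZMod 2 := fun P =>
    if P = ![1, 1, 0] then f ![1, 0, 0] ![0, 1, 0]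
    else if P = ![1, 0, 1] then f ![1, 0, 0] ![0, 0, 1]
    else if P = ![0, 1, 1] then f ![0, 1, 0] ![0, 0, 1]
    else if P = ![1, 1, 1] then f ![1, 1, 0] ![0, 0, 1] + f ![1, 0, 0] ![0, 1, 0]
    else 0
  have s0 : s 0 = 0 := by
    simp only [s]
    rw [if_neg (by decide), if_neg (by decide), if_neg (by decide), if_neg (by decide)]
  refine ⟨s, s0, fun P Q => ?_⟩
  have hg := hf.add (cob_fs s s0)
  refine CharTwo.add_eq_zero.1 (hg.eq_zero (fun i => ?_) P Q)
  have w0 := congrFun h 0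
  have w1 := congrFun h 1
  have w2 := congrFun h 2
  simp only [synd] at w0 w1 w2
  have s1 : s ![1, 0, 0] = 0 := by
    simp only [s]
    rw [if_neg (by decide), if_neg (by decide), if_neg (by decide), if_neg (by decide)]
  have s2 : s ![0, 1, 0] = 0 := by
    simp only [s]
    rw [if_neg (by decide), if_neg (by decide), if_neg (by decide), if_neg (by decide)]
  have s3 : s ![0, 0, 1] = 0 := by
    simp only [s]
    rw [if_neg (by decide), if_neg (by decide), if_neg (by decide), if_neg (by decide)]
  have s4 : s ![1, 1, 0] = f ![1, 0, 0] ![0, 1, 0] := by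
    simp only [s]
    rw [if_pos trivial]
  have s5 : s ![1, 0, 1] = f ![1, 0, 0] ![0, 0, 1] := by
    simp only [s]
    rw [if_neg (by decide), if_pos trivial]
  have s6 : s ![0, 1, 1] = f ![0, 1, 0] ![0, 0, 1] := by
    simp only [s]
    rw [if_neg (by decide), if_neg (by decide), if_pos trivial]
  have s7 : s ![1, 1, 1] = f ![1, 1, 0] ![0, 0, 1] + f ![1, 0, 0] ![0, 1, 0] := by
    simp only [s]
    rw [if_neg (by decide), if_neg (by decide), if_neg (by decide), if_pos trivial]
  clear_value s
  have a0 : (![1, 0, 0] : V3) + ![0, 1, 0] = ![1, 1, 0] := by decide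
  have a1 : (![1, 0, 0] : V3) + ![0, 0, 1] = ![1, 0, 1] := by decide
  have a2 : (![0, 1, 0] : V3) + ![0, 0, 1] = ![0, 1, 1] := by decide
  have a3 : (![1, 1, 0] : V3) + ![0, 0, 1] = ![1, 1, 1] := by decide
  have a4 : (![1, 0, 1] : V3) + ![0, 1, 0] = ![1, 1, 1] := by decide
  have a5 : (![0, 1, 1] : V3) + ![1, 0, 0] = ![1, 1, 1] := by decide
  have a6 : (![1, 1, 0] : V3) + ![1, 0, 1] = ![0, 1, 1] := by decide
  generalize hf0 : f ![1, 0, 0] ![0, 1, 0] = f0 at *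
  generalize hf1 : f ![1, 0, 0] ![0, 0, 1] = f1 at *
  generalize hf2 : f ![0, 1, 0] ![0, 0, 1] = f2 at *
  generalize hf3 : f ![1, 1, 0] ![0, 0, 1] = f3 at *
  generalize hf4 : f ![1, 0, 1] ![0, 1, 0] = f4 at *
  generalize hf5 : f ![0, 1, 1] ![1, 0, 0] = f5 at *
  generalize hf6 : f ![1, 1, 0] ![1, 0, 1] = f6 at *
  have w0' : f2 + f3 + f4 + f6 = 0 := w0
  have w1' : f1 + f3 + f5 + f6 = 0 := w1
  have w2' : f0 + f4 + f5 + f6 = 0 := w2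
  have key : f4 + (f1 + (f3 + f0)) = 0 ∧ f5 + (f2 + (f3 + f0)) = 0 ∧ f6 + (f0 + f1 + f2) = 0 := by
    clear * - w0' w1' w2'
    revert f0 f1 f2 f3 f4 f5 f6
    decide +kernel
  have c0 : ∀ x : ZMod 2, x + x = 0 := CharTwo.add_self_eq_zero
  obtain ⟨k4, k5, k6⟩ := key
  fin_cases i
  · change f ![1, 0, 0] ![0, 1, 0] + (s ![1, 0, 0] + s ![0, 1, 0] + s (![1, 0, 0] + ![0, 1, 0])) = 0
    rw [a0, s1, s2, s4, hf0, add_zero, zero_add, c0]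
  · change f ![1, 0, 0] ![0, 0, 1] + (s ![1, 0, 0] + s ![0, 0, 1] + s (![1, 0, 0] + ![0, 0, 1])) = 0
    rw [a1, s1, s3, s5, hf1, add_zero, zero_add, c0]
  · change f ![0, 1, 0] ![0, 0, 1] + (s ![0, 1, 0] + s ![0, 0, 1] + s (![0, 1, 0] + ![0, 0, 1])) = 0
    rw [a2, s2, s3, s6, hf2, add_zero, zero_add, c0]
  · change f ![1, 1, 0] ![0, 0, 1] + (s ![1, 1, 0] + s ![0, 0, 1] + s (![1, 1, 0] + ![0, 0, 1])) = 0
    rw [a3, s4, s3, s7, hf3, add_zero, add_comm f3 f0, ← add_assoc f0, c0, zero_add, c0]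
  · change f ![1, 0, 1] ![0, 1, 0] + (s ![1, 0, 1] + s ![0, 1, 0] + s (![1, 0, 1] + ![0, 1, 0])) = 0
    rw [a4, s5, s2, s7, hf4, add_zero, k4]
  · change f ![0, 1, 1] ![1, 0, 0] + (s ![0, 1, 1] + s ![1, 0, 0] + s (![0, 1, 1] + ![1, 0, 0])) = 0
    rw [a5, s6, s1, s7, hf5, add_zero, k5]
  · change f ![1, 1, 0] ![1, 0, 1] + (s ![1, 1, 0] + s ![1, 0, 1] + s (![1, 1, 0] + ![1, 0, 1])) = 0
    rw [a6, s4, s5, s6, hf6, k6]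

/-- Every scalar factor system is cohomologous to the indicator of a line, or to zero. -/
theorem exists_chi {f : V3 → V3 → ZMod 2} (hf : FS f) :
    ∃ w s, s 0 = 0 ∧ ∀ P Q, f P Q = chi w P Q + cob s P Q := by
  have h := hf.add (chi_fs (synd f))
  obtain ⟨s, s0, hs⟩ := exists_cob_of_synd h (by
    rw [synd_add, synd_chi]; exact add_self_pi _)
  refine ⟨synd f, s, s0, fun P Q => ?_⟩
  rw [← hs, add_comm, add_assoc, CharTwo.add_self_eq_zero, add_zero]

/-! ### The two normal forms and their nonisomorphism -/

/-- The common shape of all normal forms: the factor system with components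
`chi w` and `chi w'`. -/
def normF (w w' : V3) (P Q : V3) : V2 := ![chi w P Q, chi w' P Q]

theorem normF_fs (w w' : V3) : FS (normF w w') where
  comm P Q := by rw [normF, normF, (chi_fs w).comm, (chi_fs w').comm]
  self P := by
    rw [normF, (chi_fs w).self, (chi_fs w').self]
    decide
  zero P := by
    rw [normF, (chi_fs w).zero, (chi_fs w').zero]
    decide
  tri P Q := by rw [normF, normF, (chi_fs w).tri, (chi_fs w').tri]

theorem set_eq1 : ∀ P Q : V3, P ≠ Q ∧ P ≠ 0 ∧ Q ≠ 0 ∧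
      ({P, Q, P + Q} : Finset V3) = ({![0,1,1], ![1,0,1], ![1,1,0]} : Finset V3) ↔
    (![1, 1, 1] : V3) ≠ 0 ∧ P ≠ Q ∧ P ≠ 0 ∧ Q ≠ 0 ∧ dot ![1, 1, 1] P = 0 ∧
      dot ![1, 1, 1] Q = 0 := by
  decide +kernel

theorem set_eq2 : ∀ P Q : V3, P ≠ Q ∧ P ≠ 0 ∧ Q ≠ 0 ∧
      ({P, Q, P + Q} : Finset V3) = ({![0,1,1], ![1,0,0], ![1,1,1]} : Finset V3) ↔
    (![0, 1, 1] : V3) ≠ 0 ∧ P ≠ Q ∧ P ≠ 0 ∧ Q ≠ 0 ∧ dot ![0, 1, 1] P = 0 ∧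
      dot ![0, 1, 1] Q = 0 := by
  decide +kernel

theorem chi_excl : ∀ P Q : V3, ¬ (chi ![1, 1, 1] P Q = 1 ∧ chi ![0, 1, 1] P Q = 1) := by
  decide +kernel

theorem chi_zero (P Q : V3) : chi 0 P Q = 0 := by simp [chi]

theorem chi_eq (w P Q : V3) : chi w P Q =
    if w ≠ 0 ∧ P ≠ Q ∧ P ≠ 0 ∧ Q ≠ 0 ∧ dot w P = 0 ∧ dot w Q = 0 then 1 else 0 := rfl

theorem vf1_eq : vf1 = normF 0 ![1, 1, 1] := by
  funext P Q
  simp only [vf1, normF, set_eq1, chi_zero]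
  rw [chi_eq]
  split_ifs
  · rfl
  · decide

theorem vf2_eq : vf2 = normF ![1, 1, 1] ![0, 1, 1] := by
  funext P Q
  have h := chi_excl P Q
  simp only [vf2, normF, set_eq1, set_eq2]
  rw [chi_eq, chi_eq] at h ⊢
  split_ifs at h ⊢ <;> first | rfl | decide | simp at h

/-- The operation of the loop of `vf2`, through `vf2_eq`. -/
abbrev mF2 : V3 × V2 → V3 × V2 → V3 × V2 := mF (normF ![1, 1, 1] ![0, 1, 1])

/-- No single element `(p, q)` accounts for both associators: they are `(0, (0, 1))` and
`(0, (1, 0))`. -/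
theorem two_associators : ∀ (p : V3) (q : V2),
    mF2 (mF2 (![1, 0, 0], 0) (![0, 1, 0], 0)) (![0, 0, 1], 0) =
      mF2 (p, q) (mF2 (![1, 0, 0], 0) (mF2 (![0, 1, 0], 0) (![0, 0, 1], 0))) →
    mF2 (mF2 (![1, 1, 0], 0) (![1, 0, 0], 0)) (![0, 0, 1], 0) =
      mF2 (p, q) (mF2 (![1, 1, 0], 0) (mF2 (![1, 0, 0], 0) (![0, 0, 1], 0))) → False := by
  decide +kernel

/-- The loop of `vf1` has only one nonidentity associator, the loop of `vf2` has at
least two. -/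
theorem not_iso : ¬ STSIso (STrip31 vf1) (STrip31 vf2) := by
  intro hi
  have f1 : FS vf1 := vf1_eq ▸ normF_fs _ _
  have f2 : FS vf2 := vf2_eq ▸ normF_fs _ _
  obtain ⟨φ, hφ, hm⟩ := f1.rep.hom_of_iso f2.rep hi
  obtain ⟨z, hz⟩ : ∃ z : V3 × V2, ∀ a b c, mF vf1 (mF vf1 a b) c = mF vf1 a (mF vf1 b c) ∨
      mF vf1 (mF vf1 a b) c = mF vf1 z (mF vf1 a (mF vf1 b c)) := by
    refine ⟨(0, ![0, 1]), ?_⟩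
    rintro ⟨a, x⟩ ⟨b, y⟩ ⟨c, t⟩
    simp only [vf1_eq, mF, normF, chi_zero, (chi_fs _).zero]
    generalize chi ![1, 1, 1] a b = k1
    generalize chi ![1, 1, 1] (a + b) c = k2
    generalize chi ![1, 1, 1] b c = k3
    generalize chi ![1, 1, 1] a (b + c) = k4
    have e1 : a + b + c = a + (b + c) := add_assoc _ _ _
    have e2 : x + y + ![0, k1] + t + ![0, k2] = (x + y + t) + ![0, k1 + k2] := by
      have : (![0, k1 + k2] : V2) = ![0, k1] + ![0, k2] := by simp
      rw [this]
      abel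
    have e3 : x + (y + t + ![0, k3]) + ![0, k4] = (x + y + t) + ![0, k3 + k4] := by
      have : (![0, k3 + k4] : V2) = ![0, k3] + ![0, k4] := by simp
      rw [this]
      abel
    have e4 : (![0, 0] : V2) = 0 := by decide
    rw [e1, e2, e3, zero_add, e4, add_zero]
    have e5 : k1 + k2 = k3 + k4 ∨ k1 + k2 = 1 + (k3 + k4) := by
      generalize k1 + k2 = p
      generalize k3 + k4 = q
      revert p q
      decide
    rcases e5 with e5 | e5
    · left
      rw [e5]
    · right
      rw [e5]
      have : (![0, 1 + (k3 + k4)] : V2) = ![0, 1] + ![0, k3 + k4] := by simp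
      rw [this, add_left_comm (x + y + t)]
  have hz' : ∀ a b c, mF vf2 (mF vf2 a b) c = mF vf2 a (mF vf2 b c) ∨
      mF vf2 (mF vf2 a b) c = mF vf2 (φ z) (mF vf2 a (mF vf2 b c)) := by
    intro a b c
    obtain ⟨a, rfl⟩ := hφ.2 a
    obtain ⟨b, rfl⟩ := hφ.2 b
    obtain ⟨c, rfl⟩ := hφ.2 c
    rw [← hm, ← hm, ← hm, ← hm, ← hm]
    rcases hz a b c with h | h
    · exact Or.inl (congrArg φ h)
    · exact Or.inr (congrArg φ h)
  rw [vf2_eq] at hz'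
  exact two_associators _ _
    ((hz' (![1, 0, 0], 0) (![0, 1, 0], 0) (![0, 0, 1], 0)).resolve_left (by decide +kernel))
    ((hz' (![1, 1, 0], 0) (![1, 0, 0], 0) (![0, 0, 1], 0)).resolve_left (by decide +kernel))

/-! ### Classification -/

/-- Factor systems that agree up to automorphisms of `GF(2)^3` and `GF(2)^2` and a
coboundary give isomorphic loops. -/
theorem hom_of_equiv {f g : V3 → V3 → V2} (σ : V3 → V3) (hσ : Function.Injective σ)
    (σadd : ∀ P Q, σ (P + Q) = σ P + σ Q) (τ : V2 → V2) (hτ : Function.Injective τ)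
    (τadd : ∀ x y, τ (x + y) = τ x + τ y) (S : V3 → V2)
    (h : ∀ P Q, τ (f P Q) = g (σ P) (σ Q) + cob S P Q) :
    ∃ Ψ : V3 × V2 → V3 × V2, Function.Bijective Ψ ∧ ∀ x y, Ψ (mF f x y) = mF g (Ψ x) (Ψ y) := by
  refine ⟨fun p => (σ p.1, τ p.2 + S p.1), Finite.injective_iff_bijective.1 ?_, ?_⟩
  · rintro ⟨P, x⟩ ⟨Q, y⟩ hh
    simp only [Prod.mk.injEq] at hh
    obtain ⟨h1, h2⟩ := hh
    obtain rfl := hσ h1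
    rw [hτ (add_right_cancel h2)]
  · rintro ⟨P, x⟩ ⟨Q, y⟩
    simp only [mF, σadd, τadd, h, cob, Prod.mk.injEq, true_and]
    have h1 := add_self_pi (S (P + Q))
    calc τ x + τ y + (g (σ P) (σ Q) + (S P + S Q + S (P + Q))) + S (P + Q)
        = τ x + S P + (τ y + S Q) + g (σ P) (σ Q) + (S (P + Q) + S (P + Q)) := by abel
      _ = _ := by rw [h1, add_zero]

/-- Two linearly independent functionals on `GF(2)^3` extend to a basis of the dual space. -/
theorem exists_third : ∀ w w' : V3, w ≠ 0 ∧ w' ≠ 0 ∧ w ≠ w' →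
    ∃ w'' : V3, ∀ P : V3, dot w P = 0 ∧ dot w' P = 0 ∧ dot w'' P = 0 → P = 0 := by
  decide +kernel

/-- Any two distinct lines can be moved to the lines with normal vectors `(1,1,1)` and
`(0,1,1)`: `σ` is the inverse of the matrix with rows `(1,1,1)`, `(0,1,1)`, `(0,0,1)`, applied to
the three functionals of a basis of the dual space. -/
theorem exists_sigma {w w' : V3} (hw : w ≠ 0) (hw' : w' ≠ 0) (hww : w ≠ w') :
    ∃ σ : V3 → V3, Function.Injective σ ∧ (∀ P Q, σ (P + Q) = σ P + σ Q) ∧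
      (∀ P Q, chi ![1, 1, 1] (σ P) (σ Q) = chi w P Q) ∧
      ∀ P Q, chi ![0, 1, 1] (σ P) (σ Q) = chi w' P Q := by
  obtain ⟨w'', h3⟩ := exists_third w w' ⟨hw, hw', hww⟩
  let σ : V3 → V3 := fun P => ![dot w P + dot w' P, dot w' P + dot w'' P, dot w'' P]
  have d1 : ∀ P, dot ![1, 1, 1] (σ P) = dot w P := by
    intro P
    have : dot ![1, 1, 1] (σ P) = dot w P + dot w' P + (dot w' P + dot w'' P) + dot w'' P := by
      simp [dot, σ]
    rw [this]
    generalize dot w P = x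
    generalize dot w' P = y
    generalize dot w'' P = z
    revert x y z
    decide
  have d2 : ∀ P, dot ![0, 1, 1] (σ P) = dot w' P := by
    intro P
    have : dot ![0, 1, 1] (σ P) = dot w' P + dot w'' P + dot w'' P := by
      simp [dot, σ]
    rw [this]
    generalize dot w' P = y
    generalize dot w'' P = z
    revert y z
    decide
  have d3 : ∀ P, dot ![0, 0, 1] (σ P) = dot w'' P := by
    intro P
    simp [dot, σ]
  have hadd : ∀ P Q, σ (P + Q) = σ P + σ Q := by
    intro P Q
    funext i
    fin_cases i <;> simp [σ, dot_add] <;> ring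
  clear_value σ
  have dot0 : ∀ v, dot v 0 = 0 := fun v => by simp [dot]
  have hker : ∀ P, σ P = 0 → P = 0 := by
    intro P hP
    refine h3 P ⟨?_, ?_, ?_⟩
    · rw [← d1, hP, dot0]
    · rw [← d2, hP, dot0]
    · rw [← d3, hP, dot0]
  have σ0 : σ 0 = 0 := by
    have := hadd 0 0
    rw [add_zero] at this
    simpa using this
  have hinj : Function.Injective σ := by
    intro P Q h
    apply eq_of_add_pi
    apply hker
    rw [hadd, h, add_self_pi]
  have z0 : ∀ P, σ P = 0 ↔ P = 0 := fun P => ⟨hker P, fun h => h ▸ σ0⟩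
  refine ⟨σ, hinj, hadd, ?_, ?_⟩
  · intro P Q
    have hn : (![1, 1, 1] : V3) ≠ 0 := by decide
    simp only [chi, ne_eq, d1, z0, hinj.eq_iff, hn, hw, not_false_eq_true]
  · intro P Q
    have hn : (![0, 1, 1] : V3) ≠ 0 := by decide
    simp only [chi, ne_eq, d2, z0, hinj.eq_iff, hn, hw', not_false_eq_true]

theorem exists_other : ∀ w : V3, ∃ w' : V3, w' ≠ 0 ∧ w ≠ w' := by
  decide +kernel

/-- Up to isomorphism of loops, a factor system is a coboundary, `vf1` or `vf2`, according
to the rank of the pair of syndromes of its components. -/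
theorem classify {f : V3 → V3 → V2} (hf : FS f) :
    (∃ S : V3 → V2, ∀ P Q, f P Q = cob S P Q) ∨
    ∃ g, (g = vf1 ∨ g = vf2) ∧ ∃ Ψ : V3 × V2 → V3 × V2, Function.Bijective Ψ ∧
      ∀ x y, Ψ (mF f x y) = mF g (Ψ x) (Ψ y) := by
  have comp : ∀ i : Fin 2, FS fun P Q => f P Q i := fun i =>
    ⟨fun P Q => by rw [hf.comm], fun P => by rw [hf.self]; rfl, fun P => by rw [hf.zero]; rfl,
      fun P Q => by rw [hf.tri]⟩
  obtain ⟨w, s, -, hs⟩ := exists_chi (comp 0)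
  obtain ⟨w', s', -, hs'⟩ := exists_chi (comp 1)
  by_cases hw : w = 0
  · by_cases hw' : w' = 0
    · left
      refine ⟨fun P => ![s P, s' P], fun P Q => ?_⟩
      funext i
      fin_cases i
      · simp [hs, hw, chi_zero, cob]
      · simp [hs', hw', chi_zero, cob]
    · right
      obtain ⟨v, hv, hvw⟩ := exists_other w'
      obtain ⟨σ, hσ, σadd, h1, -⟩ := exists_sigma hw' hv hvw
      refine ⟨vf1, Or.inl rfl, hom_of_equiv σ hσ σadd id Function.injective_id
        (fun _ _ => rfl) (fun P => ![s P, s' P]) fun P Q => ?_⟩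
      rw [vf1_eq]
      funext i
      fin_cases i
      · simp [hs, hw, chi_zero, cob, normF]
      · simp [hs', h1, cob, normF]
  · right
    by_cases hw' : w' = 0
    · obtain ⟨v, hv, hvw⟩ := exists_other w
      obtain ⟨σ, hσ, σadd, h1, -⟩ := exists_sigma hw hv hvw
      refine ⟨vf1, Or.inl rfl, hom_of_equiv σ hσ σadd (fun x => ![x 1, x 0]) (by decide)
        (by decide) (fun P => ![s' P, s P]) fun P Q => ?_⟩
      rw [vf1_eq]
      funext i
      fin_cases i
      · simp [hs', hw', chi_zero, cob, normF]
      · simp [hs, h1, cob, normF]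
    by_cases hww : w = w'
    · obtain ⟨v, hv, hvw⟩ := exists_other w
      obtain ⟨σ, hσ, σadd, h1, -⟩ := exists_sigma hw hv hvw
      refine ⟨vf1, Or.inl rfl, hom_of_equiv σ hσ σadd (fun x => ![x 0 + x 1, x 1]) (by decide)
        (by decide) (fun P => ![s P + s' P, s' P]) fun P Q => ?_⟩
      rw [vf1_eq]
      funext i
      fin_cases i
      · have h2 := CharTwo.add_self_eq_zero (chi w' P Q)
        simp only [Fin.zero_eta, Matrix.cons_val_zero, hs, hs', hww, cob, normF, chi_zero,
          Pi.add_apply]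
        linear_combination h2
      · simp [hs', ← hww, h1, cob, normF]
    · obtain ⟨σ, hσ, σadd, h1, h2⟩ := exists_sigma hw hw' hww
      refine ⟨vf2, Or.inr rfl, hom_of_equiv σ hσ σadd id Function.injective_id
        (fun _ _ => rfl) (fun P => ![s P, s' P]) fun P Q => ?_⟩
      rw [vf2_eq]
      funext i
      fin_cases i
      · simp [hs, h1, cob, normF]
      · simp [hs', h2, cob, normF]

/-- The loop of a coboundary is an elementary abelian group. -/
theorem cen_of_cob {f : V3 → V3 → V2} {S : V3 → V2} (h : ∀ P Q, f P Q = cob S P Q)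
    (x : V3 × V2) : Cen (mF f) x := by
  rintro ⟨A, a⟩ ⟨B, b⟩
  obtain ⟨X, x⟩ := x
  have e1 : X + A + (X + B) = A + B := by
    rw [add_add_add_comm, add_self_pi, zero_add]
  simp only [mF, h, cob, Prod.mk.injEq]
  rw [e1]
  refine ⟨rfl, ?_⟩
  have h1 := add_self_pi x
  have h2 := add_self_pi (S X)
  have h3 := add_self_pi (S (X + A))
  have h4 := add_self_pi (S (X + B))
  calc _ = (x + x) + (S X + S X) + (S (X + A) + S (X + A)) + (S (X + B) + S (X + B)) +
        (a + b + (S A + S B + S (A + B))) := by abel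
    _ = _ := by rw [h1, h2, h3, h4]; simp

/-- A centre with exactly three nonidentity elements is isomorphic to `GF(2)^2`. -/
theorem exists_iota {L : Type*} {e : L} {m : L → L → L} (h : IsSL e m) {X Y Z : L}
    (hX : X ≠ e) (hY : Y ≠ e) (hXY : X ≠ Y)
    (hc : ∀ u, Cen m u ↔ u = e ∨ u = X ∨ u = Y ∨ u = Z) :
    ∃ ι : V2 → L, Function.Injective ι ∧ (∀ v w, ι (v + w) = m (ι v) (ι w)) ∧
      ∀ z, Cen m z ↔ ∃ v, ι v = z := by
  have h1 := (hc _).1 (h.cen_mul ((hc X).2 (by simp)) ((hc Y).2 (by simp)))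
  obtain ⟨comm, self, one, cancel⟩ := h
  have hone : ∀ x, m x e = x := fun x => by rw [comm, one]
  have hrc : ∀ x y, m (m x y) y = x := fun x y => by rw [comm, comm x y, cancel]
  have n1 : m X Y ≠ e := by grind
  have n2 : m X Y ≠ X := by grind
  have n3 : m X Y ≠ Y := by grind
  have hZ : Z = m X Y := by grind
  subst hZ
  have hz : ∀ p : ZMod 2, p = 0 ∨ p = 1 := by decide
  have h10 : (1 : ZMod 2) ≠ 0 := by decide
  have h11 : (1 : ZMod 2) + 1 = 0 := by decide
  refine ⟨fun v => m (if v 0 = 0 then e else X) (if v 1 = 0 then e else Y), ?_, ?_, ?_⟩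
  · intro v w hvw
    simp only at hvw
    funext i
    fin_cases i <;> rcases hz (v 0) with hv0 | hv0 <;> rcases hz (v 1) with hv1 | hv1 <;>
      rcases hz (w 0) with hw0 | hw0 <;> rcases hz (w 1) with hw1 | hw1 <;>
      simp only [hv0, hv1, hw0, hw1, h10, if_true, if_false, one, hone] at hvw <;>
      simp only [Fin.zero_eta, Fin.mk_one, hv0, hv1, hw0, hw1] <;> grind
  · intro v w
    simp only [Pi.add_apply]
    rcases hz (v 0) with hv0 | hv0 <;> rcases hz (v 1) with hv1 | hv1 <;>
      rcases hz (w 0) with hw0 | hw0 <;> rcases hz (w 1) with hw1 | hw1 <;>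
      simp only [hv0, hv1, hw0, hw1, h10, h11, add_zero, zero_add, if_true, if_false, one, hone,
        self] <;> grind
  · intro z
    rw [hc]
    constructor
    · rintro (rfl | rfl | rfl | rfl)
      · exact ⟨![0, 0], by simp [one]⟩
      · exact ⟨![1, 0], by simp [hone]⟩
      · exact ⟨![0, 1], by simp [one]⟩
      · exact ⟨![1, 1], by simp⟩
    · rintro ⟨v, rfl⟩
      rcases hz (v 0) with hv0 | hv0 <;> rcases hz (v 1) with hv1 | hv1 <;>
        simp [hv0, hv1, one, hone]

/-- The Steiner triple systems `S(f1)` and `S(f2)` of order 31 are not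
isomorphic, and every Steiner triple system of order 31 with exactly three
Veblen points is isomorphic to `S(f1)` or to `S(f2)`. -/
theorem sts31_three_veblen_classification :
    ¬ STSIso (STrip31 vf1) (STrip31 vf2) ∧
    ∀ (α : Type u) [DecidableEq α] [Fintype α] (T : Set (Finset α)),
      Fintype.card α = 31 → IsSTS T → {x : α | IsVeblen T x}.ncard = 3 →
      STSIso T (STrip31 vf1) ∨ STSIso T (STrip31 vf2) := by

  refine ⟨not_iso, ?_⟩
  intro α _ _ T hcard hT hV
  obtain ⟨m, r⟩ := exists_rep hT
  obtain ⟨x, y, z, hxy, -, -, hxyz⟩ := Set.ncard_eq_three.1 hV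
  have hcen : ∀ u, Cen m u ↔ u = none ∨ u = some x ∨ u = some y ∨ u = some z := by
    rintro (_ | u)
    · simp [r.sl.cen_one]
    · rw [← r.veblen_iff]
      have : u ∈ {x | IsVeblen T x} ↔ u ∈ ({x, y, z} : Set α) := by rw [hxyz]
      simpa using this
  obtain ⟨ι, ιinj, ιadd, ιcen⟩ := exists_iota r.sl (by simp) (by simp) (by simpa using hxy) hcen
  have hcard' : Fintype.card (Option α) = 32 := by rw [Fintype.card_option, hcard]
  obtain ⟨f, hf, Φ, hΦ, Φm⟩ := exists_fs r.sl hcard' ι ιinj ιadd ιcen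
  rcases classify hf with ⟨S, hS⟩ | ⟨g, hg, Ψ, hΨ, Ψm⟩
  · exfalso
    -- every element would be central, but the centre has only four elements
    have hall : Function.Surjective ι := by
      intro u
      rw [← ιcen]
      obtain ⟨u, rfl⟩ := hΦ.2 u
      intro a b
      obtain ⟨a, rfl⟩ := hΦ.2 a
      obtain ⟨b, rfl⟩ := hΦ.2 b
      rw [← Φm, ← Φm, ← Φm, ← Φm, cen_of_cob hS]
    have h1 := Fintype.card_le_of_surjective ι hall
    rw [hcard'] at h1
    simp [V2] at h1
  · have hgf : FS g := by
      rcases hg with rfl | rfl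
      · exact vf1_eq ▸ normF_fs _ _
      · exact vf2_eq ▸ normF_fs _ _
    have hiso : STSIso T (STrip31 g) := by
      refine r.iso_of_hom hgf.rep (Ψ ∘ (Equiv.ofBijective Φ hΦ).symm)
        (hΨ.comp (Equiv.bijective _)) fun a b => ?_
      obtain ⟨a, rfl⟩ := hΦ.2 a
      obtain ⟨b, rfl⟩ := hΦ.2 b
      have hinv : ∀ u, (Equiv.ofBijective Φ hΦ).symm (Φ u) = u :=
        fun u => (Equiv.ofBijective Φ hΦ).symm_apply_apply u
      simp only [Function.comp, ← Φm, hinv, Ψm]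
    rcases hg with rfl | rfl
    · exact Or.inl hiso
    · exact Or.inr hiso
end

section
/- Let x be a Veblen point of a Steiner triple system (S,T) of order v. Define a structure whose points are the (v-1)/2 triples of T containing x, and in which three distinct such triples T1, T2, T3 are declared a block if and only if there exist a in T1\{x} and b in T2\{x} such that the third point of the triple of T through a and b lies in T3. Then this declaration is independent of the choice of a and b (for fixed T1, T2 it determines a unique T3), and the resulting structure is a Steiner triple system of order (v-1)/2. -/
/-!
Call triples `T1, T2, T3` through `x` *linked* if they are pairwise distinct and some triple
`{a, c, d}` of `T` meets them in points `a`, `c`, `d` with `a, c ≠ x`. Then `d ≠ x` as well, so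
being linked is a symmetric ternary relation (`Linked.swap`, `Linked.rotate`).

The content is that two of the three linked triples determine the third (`Linked.unique`).
Write `T1 = {x, a, a'}`, `T2 = {x, c, c'}`, `T3 = {x, d, e}` with `{a, c, d} ∈ T`. The Veblen
property yields `{a', c', d}`, `{a, c', e}`, `{a', c, e} ∈ T`, so whichever points of `T1` and
`T2` other than `x` are chosen, the third point of the triple through them lies in `T3`.
Existence of a third triple (`Linked.exists`) takes the triple through `x` and the third point
of any `a`, `c`. The order is found by counting: the triples through `x` partition the `v - 1`
remaining points into pairs (`card_quotPts`).
-/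

universe u v

section

variable {α : Type u} [DecidableEq α] {T : Set (Finset α)} {x : α}

theorem IsSTS.eq_of_mem (hT : IsSTS T) {s t : Finset α} (hs : s ∈ T) (ht : t ∈ T) {a b : α}
    (hab : a ≠ b) (has : a ∈ s) (hbs : b ∈ s) (hat : a ∈ t) (hbt : b ∈ t) : s = t :=
  (hT.2 a b hab).unique ⟨hs, has, hbs⟩ ⟨ht, hat, hbt⟩

theorem IsSTS.ne_of_mem (hT : IsSTS T) {a b c : α} (h : ({a, b, c} : Finset α) ∈ T) :
    a ≠ b ∧ a ≠ c ∧ b ≠ c := by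
  have h3 := hT.1 _ h
  refine ⟨?_, ?_, ?_⟩ <;> rintro rfl
  · have := Finset.card_le_two (a := a) (b := c)
    simp only [Finset.insert_eq_of_mem (Finset.mem_insert_self a {c})] at h3
    omega
  · have := Finset.card_le_two (a := b) (b := a)
    rw [Finset.insert_eq_of_mem (by simp)] at h3
    omega
  · have := Finset.card_le_two (a := a) (b := b)
    simp only [Finset.pair_eq_singleton] at h3
    omega

/-- A triple containing two distinct points is completed by a third one. -/
theorem IsSTS.exists_eq (hT : IsSTS T) {t : Finset α} (ht : t ∈ T) {a b : α} (hab : a ≠ b)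
    (ha : a ∈ t) (hb : b ∈ t) : ∃ c, t = {a, b, c} := by
  have h1 : ((t.erase a).erase b).card = 1 := by
    rw [Finset.card_erase_of_mem (by simp [hb, hab.symm]), Finset.card_erase_of_mem ha, hT.1 t ht]
  obtain ⟨c, hc⟩ := Finset.card_eq_one.1 h1
  refine ⟨c, ?_⟩
  rw [← hc, Finset.insert_erase (by simp [hb, hab.symm]), Finset.insert_erase ha]

theorem IsSTS.exists_third (hT : IsSTS T) {a b : α} (hab : a ≠ b) :
    ∃ c, ({a, b, c} : Finset α) ∈ T := by
  obtain ⟨t, ⟨ht, ha, hb⟩, -⟩ := hT.2 a b hab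
  obtain ⟨c, rfl⟩ := hT.exists_eq ht hab ha hb
  exact ⟨c, ht⟩

theorem IsSTS.third_unique (hT : IsSTS T) {a b c d : α} (hc : ({a, b, c} : Finset α) ∈ T)
    (hd : ({a, b, d} : Finset α) ∈ T) : c = d := by
  have h := hT.eq_of_mem hc hd (hT.ne_of_mem hc).1 (by simp) (by simp) (by simp) (by simp)
  have hm : c ∈ ({a, b, d} : Finset α) := h ▸ (by simp)
  have := hT.ne_of_mem hc
  simp only [Finset.mem_insert, Finset.mem_singleton] at hm
  grind

/-- Two triples through `x` sharing a further point coincide. -/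
theorem IsSTS.quot_eq (hT : IsSTS T) {S S' : QuotPts T x} {a : α} (hax : a ≠ x) (h : a ∈ S.1)
    (h' : a ∈ S'.1) : S = S' :=
  Subtype.ext (hT.eq_of_mem S.2.1 S'.2.1 hax h S.2.2 h' S'.2.2)

theorem IsSTS.exists_other (hT : IsSTS T) (S : QuotPts T x) {a : α} (hax : a ≠ x)
    (h : a ∈ S.1) : ∃ b, S.1 = {x, a, b} :=
  hT.exists_eq S.2.1 hax.symm S.2.2 h

/-- `S1`, `S2`, `S3` are pairwise distinct triples through `x` meeting a common triple of `T`
in points `a`, `c`, `d` respectively. Only `a, c ≠ x` is required; `d ≠ x` follows. -/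
def Linked (S1 S2 S3 : QuotPts T x) : Prop :=
  S1 ≠ S2 ∧ S1 ≠ S3 ∧ S2 ≠ S3 ∧ ∃ a ∈ S1.1, a ≠ x ∧ ∃ c ∈ S2.1, c ≠ x ∧
    ∃ d, ({a, c, d} : Finset α) ∈ T ∧ d ∈ S3.1

/-- A transversal to two distinct triples through `x` misses `x`. -/
theorem IsSTS.third_ne (hT : IsSTS T) {S1 S2 : QuotPts T x} (h12 : S1 ≠ S2) {a c d : α}
    (ha : a ∈ S1.1) (hax : a ≠ x) (hc : c ∈ S2.1) (hcx : c ≠ x)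
    (h : ({a, c, d} : Finset α) ∈ T) : d ≠ x := by
  rintro rfl
  have e1 := hT.eq_of_mem h S1.2.1 hax (by simp) (by simp) ha S1.2.2
  have e2 := hT.eq_of_mem h S2.2.1 hcx (by simp) (by simp) hc S2.2.2
  exact h12 (Subtype.ext (e1.symm.trans e2))

theorem Linked.swap {S1 S2 S3 : QuotPts T x} (h : Linked S1 S2 S3) : Linked S2 S1 S3 := by
  obtain ⟨h12, h13, h23, a, ha, hax, c, hc, hcx, d, h, hd⟩ := h
  exact ⟨h12.symm, h23, h13, c, hc, hcx, a, ha, hax, d, Finset.insert_comm a c {d} ▸ h, hd⟩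

theorem Linked.rotate (hT : IsSTS T) {S1 S2 S3 : QuotPts T x} (h : Linked S1 S2 S3) :
    Linked S2 S3 S1 := by
  obtain ⟨h12, h13, h23, a, ha, hax, c, hc, hcx, d, h, hd⟩ := h
  refine ⟨h23, h12.symm, h13.symm, c, hc, hcx, d, hd, hT.third_ne h12 ha hax hc hcx h, a, ?_, ha⟩
  convert h using 1
  grind

theorem Linked.exists (hT : IsSTS T) {S1 S2 : QuotPts T x} (h12 : S1 ≠ S2) :
    ∃ S3, Linked S1 S2 S3 := by
  have key : ∀ S : QuotPts T x, ∃ a ∈ S.1, a ≠ x := fun S =>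
    Finset.exists_mem_ne (by rw [hT.1 _ S.2.1]; norm_num) x
  obtain ⟨a, ha, hax⟩ := key S1
  obtain ⟨c, hc, hcx⟩ := key S2
  have hac : a ≠ c := by
    rintro rfl
    exact h12 (hT.quot_eq hax ha hc)
  obtain ⟨d, hd⟩ := hT.exists_third hac
  have hdx := hT.third_ne h12 ha hax hc hcx hd
  obtain ⟨-, had, hcd⟩ := hT.ne_of_mem hd
  obtain ⟨t, ⟨ht, hxt, hdt⟩, -⟩ := hT.2 x d hdx.symm
  refine ⟨⟨t, ht, hxt⟩, h12, ?_, ?_, a, ha, hax, c, hc, hcx, d, hd, hdt⟩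
  · rintro rfl
    -- `a` and `d` in the same triple force the transversal `{a, c, d}` to equal it.
    have e := hT.eq_of_mem hd ht had (by simp) (by simp) ha hdt
    exact h12 (hT.quot_eq hcx (show c ∈ t from e ▸ (by simp)) hc)
  · rintro rfl
    have e := hT.eq_of_mem hd ht hcd (by simp) (by simp) hc hdt
    exact h12 (hT.quot_eq hax ha (show a ∈ t from e ▸ (by simp)))

/-- Moving `c` to the other point `c'` of its triple through `x` keeps the third point of the
transversal in the same triple through `x`. -/
theorem third_mem_of_move (hT : IsSTS T) (hx : IsVeblen T x) {S2 S3 : QuotPts T x} {a c c' d d' : α}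
    (hc : c ∈ S2.1) (hcx : c ≠ x) (hc' : c' ∈ S2.1) (hcx' : c' ≠ x)
    (h : ({a, c, d} : Finset α) ∈ T) (hd : d ∈ S3.1) (hdx : d ≠ x)
    (h' : ({a, c', d'} : Finset α) ∈ T) : d' ∈ S3.1 := by
  by_cases hcc : c = c'
  · subst hcc
    exact hT.third_unique h h' ▸ hd
  · obtain ⟨b, hb⟩ := hT.exists_other S2 hcx hc
    obtain ⟨e, he⟩ := hT.exists_other S3 hdx hd
    have hbc : b = c' := by
      rw [hb] at hc'
      simp only [Finset.mem_insert, Finset.mem_singleton] at hc'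
      grind
    subst hbc
    have hv := hx c b d e a (hb ▸ S2.2.1) (he ▸ S3.2.1) h
    rw [← hT.third_unique hv h', he]
    simp

theorem Linked.unique (hT : IsSTS T) (hx : IsVeblen T x) {S1 S2 S3 S3' : QuotPts T x}
    (h : Linked S1 S2 S3) (h' : Linked S1 S2 S3') : S3 = S3' := by
  obtain ⟨h12, h13, h23, a, ha, hax, c, hc, hcx, d, h, hd⟩ := h
  obtain ⟨-, -, -, a', ha', hax', c', hc', hcx', d', h', hd'⟩ := h'
  have hdx := hT.third_ne h12 ha hax hc hcx h
  have hdx' := hT.third_ne h12 ha' hax' hc' hcx' h'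
  have hac : a ≠ c' := by
    rintro rfl
    exact h12 (hT.quot_eq hax ha hc')
  obtain ⟨f, hf⟩ := hT.exists_third hac
  -- The pair `(a, c)` is moved to `(a, c')` and then to `(a', c')`.
  have hfx := hT.third_ne h12 ha hax hc' hcx' hf
  have hf3 := third_mem_of_move hT hx hc hcx hc' hcx' h hd hdx hf
  rw [Finset.insert_comm] at hf h'
  exact hT.quot_eq hdx' (third_mem_of_move hT hx ha hax ha' hax' hf hf3 hfx h') hd'

theorem mem_quotTriples {b : Finset (QuotPts T x)} :
    b ∈ QuotTriples T x ↔ ∃ S1 S2 S3, Linked S1 S2 S3 ∧ b = {S1, S2, S3} := by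
  simp only [QuotTriples, Linked, Set.mem_ofPred_eq]
  constructor
  · rintro ⟨S1, S2, S3, h1, h2, h3, hb, h⟩
    exact ⟨S1, S2, S3, ⟨h1, h2, h3, h⟩, hb⟩
  · rintro ⟨S1, S2, S3, ⟨h1, h2, h3, h⟩, hb⟩
    exact ⟨S1, S2, S3, h1, h2, h3, hb, h⟩

/-- By symmetry, any two members of a block may be listed first. -/
theorem exists_linked_of_mem (hT : IsSTS T) {b : Finset (QuotPts T x)} (hb : b ∈ QuotTriples T x)
    {P Q : QuotPts T x} (hPQ : P ≠ Q) (hP : P ∈ b) (hQ : Q ∈ b) :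
    ∃ R, Linked P Q R ∧ b = {P, Q, R} := by
  obtain ⟨S1, S2, S3, h, rfl⟩ := mem_quotTriples.1 hb
  simp only [Finset.mem_insert, Finset.mem_singleton] at hP hQ
  rcases hP with rfl | rfl | rfl <;> rcases hQ with rfl | rfl | rfl
  · exact absurd rfl hPQ
  · exact ⟨_, h, rfl⟩
  · exact ⟨_, h.swap.rotate hT, by grind⟩
  · exact ⟨_, h.swap, by grind⟩
  · exact absurd rfl hPQ
  · exact ⟨_, h.rotate hT, by grind⟩
  · exact ⟨_, (h.rotate hT).rotate hT, by grind⟩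
  · exact ⟨_, (h.rotate hT).swap, by grind⟩
  · exact absurd rfl hPQ

theorem isSTS_quotTriples (hT : IsSTS T) (hx : IsVeblen T x) : IsSTS (QuotTriples T x) := by
  refine ⟨fun b hb => ?_, fun P Q hPQ => ?_⟩
  · obtain ⟨S1, S2, S3, h, rfl⟩ := mem_quotTriples.1 hb
    exact Finset.card_eq_three.2 ⟨S1, S2, S3, h.1, h.2.1, h.2.2.1, rfl⟩
  · obtain ⟨R, hR⟩ := Linked.exists hT hPQ
    refine ⟨{P, Q, R}, ⟨mem_quotTriples.2 ⟨P, Q, R, hR, rfl⟩, by simp, by simp⟩, ?_⟩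
    rintro b ⟨hb, hP, hQ⟩
    obtain ⟨R', hR', rfl⟩ := exists_linked_of_mem hT hb hPQ hP hQ
    rw [hR.unique hT hx hR']

theorem card_quotPts [Fintype α] (hT : IsSTS T) (x : α) :
    Nat.card (QuotPts T x) = (Fintype.card α - 1) / 2 := by
  classical
  have hcover : (Finset.univ : Finset (QuotPts T x)).biUnion (fun S => S.1.erase x) =
      Finset.univ.erase x := by
    ext a
    simp only [Finset.mem_biUnion, Finset.mem_univ, true_and, Finset.mem_erase, and_true]
    refine ⟨fun ⟨_, h, _⟩ => h, fun hax => ?_⟩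
    obtain ⟨t, ⟨ht, hxt, hat⟩, -⟩ := hT.2 x a (Ne.symm hax)
    exact ⟨⟨t, ht, hxt⟩, hax, hat⟩
  have hcard := congrArg Finset.card hcover
  rw [Finset.card_biUnion, Finset.sum_congr rfl (g := fun _ => 2),
    Finset.card_erase_of_mem (Finset.mem_univ x)] at hcard
  · simp only [Finset.sum_const, Finset.card_univ, smul_eq_mul] at hcard
    rw [Nat.card_eq_fintype_card, ← hcard, Nat.mul_div_cancel _ two_pos]
  · intro S _
    rw [Finset.card_erase_of_mem S.2.2, hT.1 _ S.2.1]
  · intro S _ S' _ hne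
    refine Finset.disjoint_left.2 fun a ha ha' => hne ?_
    rw [Finset.mem_erase] at ha ha'
    exact hT.quot_eq ha.1 ha.2 ha'.2

end

/-- Let `x` be a Veblen point of a Steiner triple system of order `v`. Then for
any two distinct triples `T1`, `T2` through `x` there is a unique third triple
`T3` through `x` completing them to a block of the quotient system (so the
declaration of blocks does not depend on the choice of the points `a`, `c`),
and the quotient structure at `x` is a Steiner triple system of order `(v-1)/2`. -/
theorem quotient_at_veblen_is_sts {α : Type u} [DecidableEq α] [Fintype α]
    (T : Set (Finset α)) (v : ℕ) (hcard : Fintype.card α = v) (hT : IsSTS T)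
    (x : α) (hx : IsVeblen T x) :
    (∀ T1 T2 : QuotPts T x, T1 ≠ T2 →
      ∃! T3 : QuotPts T x, T3 ≠ T1 ∧ T3 ≠ T2 ∧
        ∃ a ∈ T1.1, a ≠ x ∧ ∃ c ∈ T2.1, c ≠ x ∧
          ∃ d, ({a, c, d} : Finset α) ∈ T ∧ d ∈ T3.1) ∧
    IsSTS (QuotTriples T x) ∧ Nat.card (QuotPts T x) = (v - 1) / 2 := by
  subst hcard
  refine ⟨fun T1 T2 h12 => ?_, isSTS_quotTriples hT hx, card_quotPts hT x⟩
  obtain ⟨T3, h⟩ := Linked.exists hT h12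
  refine ⟨T3, ⟨h.2.1.symm, h.2.2.1.symm, h.2.2.2⟩, ?_⟩
  rintro S ⟨h1, h2, hS⟩
  exact Linked.unique hT hx ⟨h12, h1.symm, h2.symm, hS⟩ h
end
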